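/- There exist absolute constants c > 0 and c' > 0 such that, in the convex-aggregation setting of the context with probe set Ψ̃_{Λ_ε} and with card(Λ_ε) ≤ (c'/ε)^N, the selected estimator F̂ satisfies E‖F̂ − f‖_p ≤ 3·min_{λ∈Λ} ‖f − F_λ‖_p + c·Q₁(p)·ε·√(N ln(1/ε)) + 6Lε, where Q₁(p) = 1 for p ∈ [1,2] and Q₁(p) = max_{λ,ν∈Λ_ε, F_λ≠F_ν} (‖Σ_i(λ_i − ν_i)f_i‖_{2p−2}/‖Σ_i(λ_i − ν_i)f_i‖_p)^{p−1} for p ∈ (2,∞). -/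

import Mathlib

open MeasureTheory
open scoped ENNReal

/-- Lebesgue measure restricted to the unit cube `[0,1]^d`. -/
noncomputable def cubeMeasure (d : ℕ) : Measure (Fin d → ℝ) :=
  volume.restrict (Set.Icc 0 1)

/-- The real-valued `L^r` norm on the unit cube. -/
noncomputable def Lnorm {d : ℕ} (r : ℝ≥0∞) (g : (Fin d → ℝ) → ℝ) : ℝ :=
  (eLpNorm g r (cubeMeasure d)).toReal

/-- The simplex `Λ = {λ : λ_i ≥ 0, Σ λ_i ≤ 1}` in `ℝ^N`. -/
def simplex (N : ℕ) : Set (Fin N → ℝ) :=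
  {l | (∀ i, 0 ≤ l i) ∧ ∑ i, l i ≤ 1}

theorem aux_holder {α : Type*} [MeasurableSpace α] {μ : Measure α} {p q : ℝ≥0∞}
    (hpq : ENNReal.HolderConjugate q p) {a b : α → ℝ} (ha : MemLp a q μ) (hb : MemLp b p μ) :
    |∫ t, a t * b t ∂μ| ≤ (eLpNorm a q μ).toReal * (eLpNorm b p μ).toReal := by
  have h := eLpNorm_smul_le_mul_eLpNorm (p := q) (q := p) (r := 1) hb.1 ha.1
  have h2 : ‖∫ t, a t * b t ∂μ‖ₑ ≤ eLpNorm a q μ * eLpNorm b p μ := by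
    refine (enorm_integral_le_lintegral_enorm _).trans ?_
    rw [eLpNorm_one_eq_lintegral_enorm] at h
    simpa using h
  have h3 := ENNReal.toReal_mono (ENNReal.mul_ne_top ha.2.ne hb.2.ne) h2
  rw [ENNReal.toReal_mul] at h3
  simpa using h3

theorem aux_gauss {Ω : Type*} [MeasurableSpace Ω] {P : Measure Ω} {Z : Ω → ℝ} (hZ : Measurable Z)
    (s : NNReal) (hmap : Measure.map Z P = ProbabilityTheory.gaussianReal 0 (s ^ 2))
    (k : ℝ) (hk : 1 ≤ k) :
    Integrable (fun ω => max (|Z ω| - k * s) 0) P ∧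
    ∫ ω, max (|Z ω| - k * s) 0 ∂P ≤ 2 * s * Real.exp (-k ^ 2 / 2) := by
  set G := ProbabilityTheory.gaussianReal 0 (s ^ 2) with hG
  have hm : Measurable (fun x : ℝ => max (|x| - k * s) 0) := by fun_prop
  have e1 : ∫ ω, max (|Z ω| - k * s) 0 ∂P = ∫ x, max (|x| - k * s) 0 ∂G := by
    rw [← hmap, integral_map hZ.aemeasurable hm.aestronglyMeasurable]
  have e2 : Integrable (fun ω => max (|Z ω| - k * s) 0) P ↔
      Integrable (fun x : ℝ => max (|x| - k * s) 0) G := by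
    rw [← hmap, integrable_map_measure hm.aestronglyMeasurable hZ.aemeasurable]
    rfl
  rw [e1, e2]
  rcases eq_or_ne s 0 with rfl | hs
  · have : G = Measure.dirac 0 := by simp [hG]
    rw [this]
    refine ⟨?_, by simp⟩
    exact integrable_dirac (by simp)
  have hs0 : (0 : ℝ) < s := by positivity
  have ht : ∀ t : ℝ, ∫ x, Real.exp (t * x) ∂G = Real.exp (s ^ 2 * t ^ 2 / 2) := by
    intro t
    have := ProbabilityTheory.mgf_gaussianReal (p := G) (X := id) (by rw [Measure.map_id]) t
    simpa [ProbabilityTheory.mgf] using this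
  have hi : ∀ t : ℝ, Integrable (fun x => Real.exp (t * x)) G := fun t =>
    ProbabilityTheory.integrable_exp_mul_gaussianReal t
  have hgi : Integrable (fun x => s * Real.exp (-k^2) *
      (Real.exp (k / s * x) + Real.exp (-(k / s) * x))) G :=
    ((hi _).add (hi _)).const_mul _
  have hle : ∀ x : ℝ, max (|x| - k * s) 0 ≤ s * Real.exp (-k^2) *
      (Real.exp (k / s * x) + Real.exp (-(k / s) * x)) := by
    intro x
    refine max_le ?_ (by positivity)
    have h1 : Real.exp (k / s * |x|) ≤ Real.exp (k / s * x) + Real.exp (-(k / s) * x) := by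
      rcases abs_choice x with h | h <;> rw [h]
      · have := Real.exp_pos (-(k / s) * x); linarith
      · have := Real.exp_pos ((k / s) * x)
        rw [mul_neg, ← neg_mul]; linarith
    have h2 : |x| - k * s ≤ s * Real.exp (-k^2) * Real.exp (k / s * |x|) := by
      rw [mul_assoc, ← Real.exp_add]
      have h3 := Real.add_one_le_exp (-k^2 + k / s * |x|)
      have h4 : |x| - k * s ≤ s * (-k^2 + k / s * |x| + 1) ∨ |x| - k * s ≤ 0 := by
        by_cases h : |x| - k * s ≤ 0
        · exact Or.inr h
        left
        push Not at h
        have : s * (-k^2 + k / s * |x| + 1) = k * (|x| - k * s) + s := by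
          field_simp
          ring
        rw [this]
        nlinarith
      rcases h4 with h4 | h4
      · exact h4.trans (by gcongr)
      · exact h4.trans (by positivity)
    exact h2.trans (by gcongr)
  refine ⟨?_, ?_⟩
  · refine hgi.mono' hm.aestronglyMeasurable (Filter.Eventually.of_forall fun x => ?_)
    rw [Real.norm_of_nonneg (le_max_right _ _)]
    exact hle x
  · refine (integral_mono_of_nonneg (Filter.Eventually.of_forall fun x => le_max_right _ _) hgi
      (Filter.Eventually.of_forall hle)).trans ?_
    rw [integral_const_mul, integral_add (hi _) (hi _), ht, ht]
    have : (s:ℝ) ^ 2 * (k / s) ^ 2 / 2 = k ^ 2 / 2 := by field_simp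
    rw [neg_sq, this]
    have : Real.exp (-k^2/2) = Real.exp (-k^2) * Real.exp (k^2/2) := by
      rw [← Real.exp_add]; ring_nf
    rw [this]
    apply le_of_eq
    ring

theorem aux_psi {α : Type*} [MeasurableSpace α] {μ : Measure α} [IsProbabilityMeasure μ]
    {p q : ℝ≥0∞} (hp1 : 1 ≤ p) (hp : p ≠ ⊤) (hpq : ENNReal.HolderConjugate q p)
    {g ψ : α → ℝ} (hgm : Measurable g) (hg : MemLp g p μ)
    (hn : (eLpNorm g p μ).toReal ≠ 0) (hfin : 2 < p → eLpNorm g (2 * p - 2) μ ≠ ⊤)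
    (hψ : ∀ t, ψ t = |g t| ^ (p.toReal - 1) * Real.sign (g t) /
      (eLpNorm g p μ).toReal ^ (p.toReal - 1)) :
    MemLp ψ q μ ∧ (eLpNorm ψ q μ).toReal = 1 ∧
    ∫ t, ψ t * g t ∂μ = (eLpNorm g p μ).toReal ∧
    (p ≤ 2 → (eLpNorm ψ 2 μ).toReal ≤ 1) ∧
    (2 < p → (eLpNorm ψ 2 μ).toReal ≤ ((eLpNorm g (2 * p - 2) μ).toReal /
      (eLpNorm g p μ).toReal) ^ (p.toReal - 1)) := by
  set n := (eLpNorm g p μ).toReal with hndef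
  have hn0 : 0 < n := lt_of_le_of_ne ENNReal.toReal_nonneg (Ne.symm hn)
  set r := p.toReal - 1 with hr
  have hpr1 : 1 ≤ p.toReal := by
    have := ENNReal.toReal_mono hp hp1
    simpa using this
  have hr0 : 0 ≤ r := by linarith
  have hp0 : p ≠ 0 := (lt_of_lt_of_le one_pos hp1).ne'
  have hsm : Measurable Real.sign := by
    unfold Real.sign
    exact Measurable.ite measurableSet_Iio measurable_const
      (Measurable.ite measurableSet_Ioi measurable_const measurable_const)
  have hψm : Measurable ψ := by
    have : ψ = fun t => |g t| ^ r * Real.sign (g t) / n ^ r := funext hψ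
    rw [this]
    have := hsm.comp hgm
    exact (((hgm.abs).pow_const r).mul this).div_const _
  have hsign : ∀ x : ℝ, |Real.sign x| ≤ 1 := by
    intro x
    rcases Real.sign_apply_eq x with h | h | h <;> rw [h] <;> simp
  have hint : ∫ t, ψ t * g t ∂μ = n := by
    have e : ∀ t, ψ t * g t = ‖g t‖ ^ p.toReal / n ^ r := by
      intro t
      rw [hψ, Real.norm_eq_abs]
      have h1 : Real.sign (g t) * g t = |g t| := by
        rcases lt_trichotomy (g t) 0 with h | h | h
        · rw [Real.sign_of_neg h, abs_of_neg h]; ring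
        · simp [h]
        · rw [Real.sign_of_pos h, abs_of_pos h]; ring
      have h2 : |g t| ^ p.toReal = |g t| ^ r * |g t| := by
        have : p.toReal = r + 1 := by rw [hr]; ring
        rw [this, Real.rpow_add_one' (abs_nonneg _) (by linarith)]
      rw [h2, ← h1]; ring
    simp_rw [e]
    rw [integral_div]
    have h3 := hg.eLpNorm_eq_integral_rpow_norm hp0 hp
    have hI : 0 ≤ ∫ a, ‖g a‖ ^ p.toReal ∂μ := integral_nonneg fun _ => by positivity
    have h4 : n = (∫ a, ‖g a‖ ^ p.toReal ∂μ) ^ p.toReal⁻¹ := by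
      rw [hndef, h3, ENNReal.toReal_ofReal (by positivity)]
    have h5 : ∫ a, ‖g a‖ ^ p.toReal ∂μ = n ^ p.toReal := by
      rw [h4, ← Real.rpow_mul hI, inv_mul_cancel₀ (by linarith), Real.rpow_one]
    rw [h5, ← Real.rpow_sub hn0, hr]
    simp
  have hbound : ∀ s : ℝ≥0∞, 0 < r → eLpNorm ψ s μ ≤
      (ENNReal.ofReal (n ^ r))⁻¹ * eLpNorm g (s * ENNReal.ofReal r) μ ^ r := by
    intro s hr
    rw [← eLpNorm_norm_rpow g hr]
    have : (ENNReal.ofReal (n ^ r))⁻¹ = ENNReal.ofReal ((n ^ r)⁻¹) := by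
      rw [ENNReal.ofReal_inv_of_pos (by positivity)]
    rw [this]
    refine (eLpNorm_le_mul_eLpNorm_of_ae_le_mul (Filter.Eventually.of_forall fun t => ?_) s)
    rw [hψ, norm_div, norm_mul, Real.norm_eq_abs, Real.norm_eq_abs, Real.norm_eq_abs,
      Real.norm_eq_abs, Real.norm_eq_abs, abs_of_nonneg (a := |g t| ^ r) (by positivity),
      abs_of_pos (a := n ^ r) (by positivity), div_eq_inv_mul]
    gcongr
    exact mul_le_of_le_one_right (by positivity) (hsign _)
  have hq1 : eLpNorm ψ q μ ≤ 1 := by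
    rcases eq_or_lt_of_le hr0 with h | h
    · have : eLpNorm ψ q μ ≤ μ Set.univ ^ q.toReal⁻¹ * ENNReal.ofReal 1 := by
        refine eLpNorm_le_of_ae_bound (Filter.Eventually.of_forall fun t => ?_)
        rw [hψ, ← h]
        simpa using hsign _
      simpa using this
    · refine (hbound q h).trans ?_
      have h1 : q * ENNReal.ofReal r = p := by
        have e : ENNReal.ofReal r = p - 1 := by
          rw [hr, ENNReal.ofReal_sub _ zero_le_one, ENNReal.ofReal_toReal hp]; simp
        have := ENNReal.HolderConjugate.conj_eq (p := p) (q := q) (h := hpq.symm)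
        rw [e, this, add_mul, one_mul, ENNReal.inv_mul_cancel, tsub_add_cancel_of_le hp1]
        · rw [← e]; simpa using h
        · exact ENNReal.sub_ne_top hp
      rw [h1]
      have h2 : eLpNorm g p μ = ENNReal.ofReal n := by
        rw [hndef, ENNReal.ofReal_toReal hg.2.ne]
      rw [h2, ENNReal.ofReal_rpow_of_pos hn0]
      refine (ENNReal.inv_mul_cancel ?_ ENNReal.ofReal_ne_top).le
      have : 0 < n ^ r := by positivity
      simpa using this
  have hψq : MemLp ψ q μ := ⟨hψm.aestronglyMeasurable, hq1.trans_lt ENNReal.one_lt_top⟩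
  refine ⟨hψq, ?_, hint, ?_, ?_⟩
  · apply le_antisymm
    · have := ENNReal.toReal_mono ENNReal.one_ne_top hq1
      simpa using this
    · have := aux_holder hpq hψq hg
      rw [hint, ← hndef, abs_of_pos hn0] at this
      by_contra hc
      push Not at hc
      nlinarith
  · intro h2
    have h3 : (2 : ℝ≥0∞) ≤ q := by
      have e := ENNReal.holderConjugate_iff.1 hpq
      by_contra hc
      push Not at hc
      have a1 : (2:ℝ≥0∞)⁻¹ < q⁻¹ := ENNReal.inv_lt_inv.2 hc
      have a2 : (2:ℝ≥0∞)⁻¹ ≤ p⁻¹ := ENNReal.inv_le_inv.2 h2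
      have := ENNReal.add_lt_add_of_lt_of_le (by simp) a1 a2
      rw [e, ENNReal.inv_two_add_inv_two] at this
      exact lt_irrefl _ this
    have := (eLpNorm_le_eLpNorm_of_exponent_le h3 hψm.aestronglyMeasurable).trans hq1
    have := ENNReal.toReal_mono ENNReal.one_ne_top this
    simpa using this
  · intro h2
    by_cases htop : eLpNorm g (2 * p - 2) μ = ⊤
    · exact absurd htop (hfin h2)
    have h : 0 < r := by
      have := (ENNReal.toReal_lt_toReal (by simp) hp).2 h2
      simp at this
      linarith
    have := hbound 2 h
    have e : 2 * ENNReal.ofReal r = 2 * p - 2 := by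
      rw [hr, ENNReal.ofReal_sub _ zero_le_one, ENNReal.ofReal_toReal hp, ENNReal.mul_sub]
      · simp
      · simp
    rw [e] at this
    have h3 : ENNReal.ofReal (n ^ r) ≠ 0 := by
      have : 0 < n ^ r := by positivity
      simpa using this
    have := ENNReal.toReal_mono (ENNReal.mul_ne_top (ENNReal.inv_ne_top.2 h3)
      (ENNReal.rpow_ne_top_of_nonneg hr0 htop)) this
    rw [ENNReal.toReal_mul, ENNReal.toReal_inv, ENNReal.toReal_ofReal (by positivity),
      ← ENNReal.toReal_rpow] at this
    rw [Real.div_rpow ENNReal.toReal_nonneg hn0.le, div_eq_inv_mul]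
    exact this

instance aux_prob (d : ℕ) : IsProbabilityMeasure (cubeMeasure d) := by
  constructor
  rw [cubeMeasure, Measure.restrict_apply MeasurableSet.univ, Set.univ_inter, Real.volume_Icc_pi]
  simp

theorem aux_tri {α : Type*} [MeasurableSpace α] {μ : Measure α} {p : ℝ≥0∞} (hp1 : 1 ≤ p)
    {a b : α → ℝ} (c : α → ℝ) (ha : MemLp a p μ) (hb : MemLp b p μ) (h : ∀ t, c t = a t + b t) :
    (eLpNorm c p μ).toReal ≤ (eLpNorm a p μ).toReal + (eLpNorm b p μ).toReal := by
  have : c = a + b := funext h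
  rw [this, ← ENNReal.toReal_add ha.2.ne hb.2.ne]
  exact ENNReal.toReal_mono (ENNReal.add_ne_top.2 ⟨ha.2.ne, hb.2.ne⟩) (eLpNorm_add_le ha.1 hb.1 hp1)

theorem aux_symm {α : Type*} [MeasurableSpace α] {μ : Measure α} {p : ℝ≥0∞}
    (a b : α → ℝ) :
    (eLpNorm (fun t => a t - b t) p μ) = (eLpNorm (fun t => b t - a t) p μ) := by
  have : (fun t => a t - b t) = -(fun t => b t - a t) := by ext t; simp
  rw [this, eLpNorm_neg]

theorem aux_net {α : Type*} [MeasurableSpace α] {μ : Measure α} {p : ℝ≥0∞} (hp1 : 1 ≤ p) {N : ℕ}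
    {F : Fin N → α → ℝ} (hF : ∀ i, MemLp (F i) p μ) {L : ℝ} (hL : 0 ≤ L)
    (hFL : ∀ i, eLpNorm (F i) p μ ≤ ENNReal.ofReal L) (l m : Fin N → ℝ) (h : α → ℝ)
    (hh : ∀ t, h t = ∑ i, l i * F i t - ∑ i, m i * F i t) {ε : ℝ} (hε : ∑ i, |l i - m i| ≤ ε) :
    (eLpNorm h p μ).toReal ≤ L * ε := by
  have e : h = ∑ i, (l i - m i) • F i := by
    ext t
    rw [hh, Finset.sum_apply, ← Finset.sum_sub_distrib]
    refine Finset.sum_congr rfl fun i _ => ?_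
    simp; ring
  have hε0 : 0 ≤ ε := le_trans (Finset.sum_nonneg fun _ _ => abs_nonneg _) hε
  refine ENNReal.toReal_le_of_le_ofReal (by positivity) ?_
  rw [e]
  refine (eLpNorm_sum_le (fun i _ => ((hF i).const_smul _).1) hp1).trans ?_
  calc ∑ i, eLpNorm ((l i - m i) • F i) p μ ≤ ∑ i, ENNReal.ofReal (L * |l i - m i|) := by
        refine Finset.sum_le_sum fun i _ => ?_
        rw [eLpNorm_const_smul, mul_comm, ENNReal.ofReal_mul hL, Real.enorm_eq_ofReal_abs]
        gcongr
        exact hFL i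
    _ = ENNReal.ofReal (∑ i, L * |l i - m i|) :=
        (ENNReal.ofReal_sum_of_nonneg fun i _ => by positivity).symm
    _ ≤ _ := by
        rw [← Finset.mul_sum]
        exact ENNReal.ofReal_le_ofReal (by gcongr)

theorem aux_kappa {n ε : ℝ} {N : ℕ} (hN : 1 ≤ N) (hn : 1 ≤ n) (hε : 0 < ε) (hε2 : ε < 1 / 2)
    (h : n ≤ (16 / ε) ^ N) :
    1 ≤ Real.sqrt (2 * Real.log (n ^ 2 / ε)) ∧
    Real.sqrt (2 * Real.log (n ^ 2 / ε)) ≤ 5 * Real.sqrt (N * Real.log (1 / ε)) ∧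
    n ^ 2 * Real.exp (-(Real.sqrt (2 * Real.log (n ^ 2 / ε))) ^ 2 / 2) = ε := by
  have hN' : (1 : ℝ) ≤ N := by exact_mod_cast hN
  set l := Real.log (1 / ε) with hl
  have hl2 : Real.log 2 ≤ l := by
    apply Real.log_le_log (by norm_num)
    rw [le_div_iff₀ hε]; linarith
  have hlog2 : (1:ℝ)/2 < Real.log 2 := by have := Real.log_two_gt_d9; linarith
  have e : Real.log (n ^ 2 / ε) = 2 * Real.log n + l := by
    rw [Real.log_div (by positivity) hε.ne', Real.log_pow, hl, one_div, Real.log_inv]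
    push_cast; ring
  have hn0 : 0 ≤ Real.log n := Real.log_nonneg hn
  have hup : Real.log n ≤ N * (5 * l) := by
    have h1 := Real.log_le_log (by linarith) h
    rw [Real.log_pow, Real.log_div (by norm_num) hε.ne'] at h1
    have h2 : Real.log 16 = 4 * Real.log 2 := by
      rw [show (16:ℝ) = 2 ^ 4 by norm_num, Real.log_pow]; norm_num
    have h3 : l = - Real.log ε := by rw [hl, one_div, Real.log_inv]
    refine h1.trans ?_
    gcongr
    linarith
  have hpos : 0 ≤ 2 * Real.log (n ^ 2 / ε) := by rw [e]; nlinarith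
  refine ⟨?_, ?_, ?_⟩
  · rw [Real.one_le_sqrt, e]; linarith
  · have : (5:ℝ) = Real.sqrt 25 := by
      rw [show (25:ℝ) = 5 ^ 2 by norm_num, Real.sqrt_sq (by norm_num)]
    rw [this, ← Real.sqrt_mul (by norm_num)]
    apply Real.sqrt_le_sqrt
    rw [e]
    nlinarith
  · rw [Real.sq_sqrt hpos, show -(2 * Real.log (n ^ 2 / ε)) / 2 = -Real.log (n ^ 2 / ε) by ring,
      Real.exp_neg, Real.exp_log (by positivity)]
    field_simp

/-- Corollary 4 of the paper: there are absolute constants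
`c, c' > 0` such that for the convex aggregation procedure with probe set
`Ψ̃_{Λ_ε}` and `card Λ_ε ≤ (c'/ε)^N`, the selected estimator satisfies
`E‖F̂ − f‖_p ≤ 3 min_λ ‖f − F_λ‖_p + c·Q₁(p)·ε·√(N ln(1/ε)) + 6Lε`. -/
theorem stmt_13 :
    ∃ c : ℝ, 0 < c ∧ ∃ c' : ℝ, 0 < c' ∧
    ∀ (d N : ℕ), 1 ≤ d → 1 ≤ N →
    ∀ p q : ℝ≥0∞, 1 ≤ p → p ≠ ⊤ → 1 / p + 1 / q = 1 →
    ∀ (f : (Fin d → ℝ) → ℝ) (F : Fin N → (Fin d → ℝ) → ℝ)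
      (FL : (Fin N → ℝ) → (Fin d → ℝ) → ℝ),
      (∀ lam t, FL lam t = ∑ i, lam i * F i t) →
      Measurable f → (∀ i, Measurable (F i)) →
    ∀ L : ℝ, 0 ≤ L →
      eLpNorm f p (cubeMeasure d) ≤ ENNReal.ofReal L →
      (∀ i, eLpNorm (F i) p (cubeMeasure d) ≤ ENNReal.ofReal L) →
    ∀ ε : ℝ, 0 < ε → ε < 1 / 2 →
    -- the finite `ε`-net `Λ_ε` of the simplex, of cardinality at most `(c'/ε)^N`
    ∀ Λε : Finset (Fin N → ℝ),
      (∀ lam ∈ Λε, lam ∈ simplex N) →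
      (∀ lam ∈ simplex N, ∃ lam' ∈ Λε, ∑ i, |lam i - lam' i| ≤ ε) →
      (Λε.card : ℝ) ≤ (c' / ε) ^ N →
      -- differences over the net have finite `L^{2p-2}` norms
      (∀ lam ∈ Λε, ∀ nu ∈ Λε, Lnorm p (fun t => FL lam t - FL nu t) ≠ 0 →
        eLpNorm (fun t => FL lam t - FL nu t) (2 * p - 2) (cubeMeasure d) ≠ ⊤) →
      (∃ lam ∈ Λε, ∃ nu ∈ Λε, Lnorm p (fun t => FL lam t - FL nu t) ≠ 0) →
    -- the probe functions `ψ_g = |g|^{p-1} sign(g) / ‖g‖_p^{p-1}`, `g ∈ G_{Λ_ε}`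
    ∀ ψ : (Fin N → ℝ) → (Fin N → ℝ) → (Fin d → ℝ) → ℝ,
      (∀ lam ∈ Λε, ∀ nu ∈ Λε, Lnorm p (fun t => FL lam t - FL nu t) ≠ 0 → ∀ t,
        ψ lam nu t = |FL lam t - FL nu t| ^ (p.toReal - 1) *
          Real.sign (FL lam t - FL nu t) /
          Lnorm p (fun u => FL lam u - FL nu u) ^ (p.toReal - 1)) →
    -- the Gaussian noise functionals
    ∀ (Ω : Type) (_ : MeasurableSpace Ω) (P : Measure Ω), IsProbabilityMeasure P →
    ∀ Z : (Fin N → ℝ) → (Fin N → ℝ) → Ω → ℝ,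
      (∀ lam nu, Measurable (Z lam nu)) →
      (∀ lam ∈ Λε, ∀ nu ∈ Λε, Lnorm p (fun t => FL lam t - FL nu t) ≠ 0 →
        Measure.map (Z lam nu) P = ProbabilityTheory.gaussianReal 0
          ((eLpNorm (ψ lam nu) 2 (cubeMeasure d)).toNNReal ^ 2)) →
      (∀ lam ∈ Λε, ∀ nu ∈ Λε, Lnorm p (fun t => FL lam t - FL nu t) ≠ 0 →
        ∀ᵐ ω ∂P, Z nu lam ω = - Z lam nu ω) →
    -- the selection procedure with `δ = ε`, `κ = √(2 ln(n_ε²/ε))`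
    ∀ κ : ℝ, κ = Real.sqrt (2 * Real.log ((Λε.card : ℝ) ^ 2 / ε)) →
    ∀ M : (Fin N → ℝ) → Ω → ℝ,
      (∀ lam ω, M lam ω =
        ⨆ pr : {pr : (Fin N → ℝ) × (Fin N → ℝ) //
            pr.1 ∈ Λε ∧ pr.2 ∈ Λε ∧ Lnorm p (fun t => FL pr.1 t - FL pr.2 t) ≠ 0},
          (|(∫ t, ψ pr.1.1 pr.1.2 t * (f t - FL lam t) ∂(cubeMeasure d)) +
              ε * Z pr.1.1 pr.1.2 ω| - ε * κ * Lnorm 2 (ψ pr.1.1 pr.1.2)) /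
            Lnorm q (ψ pr.1.1 pr.1.2)) →
    ∀ lamhat : Ω → Fin N → ℝ,
      (∀ ω, lamhat ω ∈ simplex N) →
      (∀ ω, ∀ lam ∈ simplex N, M (lamhat ω) ω ≤ M lam ω) →
      Measurable (fun ω => Lnorm p (fun t => FL (lamhat ω) t - f t)) →
    -- the constant `Q₁(p)`
    ∀ Q1 : ℝ,
      (p ≤ 2 → Q1 = 1) →
      (2 < p → Q1 =
        ⨆ pr : {pr : (Fin N → ℝ) × (Fin N → ℝ) //
            pr.1 ∈ Λε ∧ pr.2 ∈ Λε ∧ Lnorm p (fun t => FL pr.1 t - FL pr.2 t) ≠ 0},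
          (Lnorm (2 * p - 2) (fun t => FL pr.1.1 t - FL pr.1.2 t) /
            Lnorm p (fun t => FL pr.1.1 t - FL pr.1.2 t)) ^ (p.toReal - 1)) →
    ∫ ω, Lnorm p (fun t => FL (lamhat ω) t - f t) ∂P ≤
      3 * (⨅ lam : simplex N, Lnorm p (fun t => f t - FL lam.1 t))
        + c * Q1 * ε * Real.sqrt (N * Real.log (1 / ε))
        + 6 * L * ε := by
  refine ⟨20, by norm_num, 16, by norm_num, ?_⟩
  intro d N hd hN p q hp1 hp hpq f F FL hFL hfm hFm L hL hf hF ε hε hε2 Λε hΛ hnet hcard hfin hne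
    ψ hψ Ω _ P hP Z hZm hZ _ κ hκ M hM lamhat hlam hmin _ Q1 hQ1a hQ1b
  have hconj : ENNReal.HolderConjugate q p := by
    rw [ENNReal.holderConjugate_iff, add_comm]
    simpa using hpq
  have hfp : MemLp f p (cubeMeasure d) :=
    ⟨hfm.aestronglyMeasurable, hf.trans_lt ENNReal.ofReal_lt_top⟩
  have hFp : ∀ i, MemLp (F i) p (cubeMeasure d) := fun i =>
    ⟨(hFm i).aestronglyMeasurable, (hF i).trans_lt ENNReal.ofReal_lt_top⟩
  have hFLe : ∀ lam, FL lam = fun t => ∑ i, lam i * F i t := fun lam => funext (hFL lam)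
  have hFLm : ∀ lam, Measurable (FL lam) := by
    intro lam
    rw [hFLe]
    exact Finset.measurable_sum _ fun i _ => (hFm i).const_mul _
  have hFLp : ∀ lam, MemLp (FL lam) p (cubeMeasure d) := by
    intro lam
    rw [hFLe]
    exact memLp_finset_sum _ fun i _ => (hFp i).const_mul _
  set I := {pr : (Fin N → ℝ) × (Fin N → ℝ) //
            pr.1 ∈ Λε ∧ pr.2 ∈ Λε ∧ Lnorm p (fun t => FL pr.1 t - FL pr.2 t) ≠ 0} with hI
  let emb : I → (Λε ×ˢ Λε : Finset _) := fun pr => ⟨pr.1, Finset.mem_product.2 ⟨pr.2.1, pr.2.2.1⟩⟩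
  have hemb : Function.Injective emb := by
    intro a b hab
    exact Subtype.ext (congrArg (fun z => z.1) hab)
  haveI : Finite I := Finite.of_injective emb hemb
  haveI : Fintype I := Fintype.ofFinite I
  haveI : Nonempty I := by
    obtain ⟨a, ha, b, hb, hab⟩ := hne
    exact ⟨⟨(a, b), ha, hb, hab⟩⟩
  have hcardI : (Fintype.card I : ℝ) ≤ (Λε.card : ℝ) ^ 2 := by
    have := Fintype.card_le_of_injective emb hemb
    rw [Fintype.card_coe, Finset.card_product] at this
    rw [sq]
    exact_mod_cast this
  have hn1 : (1 : ℝ) ≤ Λε.card := by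
    obtain ⟨a, ha, _⟩ := hne
    exact_mod_cast Finset.card_pos.2 ⟨a, ha⟩
  obtain ⟨hκ1, hκ2, hκ3⟩ := aux_kappa hN hn1 hε hε2 hcard
  rw [← hκ] at hκ1 hκ2 hκ3
  -- facts about probes
  have hpsi := fun pr : I => aux_psi (μ := cubeMeasure d) hp1 hp hconj
    (g := fun t => FL pr.1.1 t - FL pr.1.2 t) (ψ := ψ pr.1.1 pr.1.2)
    ((hFLm _).sub (hFLm _)) ((hFLp _).sub (hFLp _)) pr.2.2.2
    (fun _ => hfin _ pr.2.1 _ pr.2.2.1 pr.2.2.2) (hψ _ pr.2.1 _ pr.2.2.1 pr.2.2.2)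
  have hσ : ∀ pr : I, Lnorm 2 (ψ pr.1.1 pr.1.2) ≤ Q1 := by
    intro pr
    rcases le_or_gt p 2 with h | h
    · rw [hQ1a h]
      exact (hpsi pr).2.2.2.1 h
    · rw [hQ1b h]
      refine ((hpsi pr).2.2.2.2 h).trans ?_
      exact le_ciSup (f := fun pr : I => (Lnorm (2 * p - 2) (fun t => FL pr.1.1 t - FL pr.1.2 t) /
            Lnorm p (fun t => FL pr.1.1 t - FL pr.1.2 t)) ^ (p.toReal - 1))
        (Set.finite_range _).bddAbove pr
  have hσ0 : ∀ pr : I, 0 ≤ Lnorm 2 (ψ pr.1.1 pr.1.2) := fun pr => ENNReal.toReal_nonneg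
  have hQ0 : 0 ≤ Q1 := (hσ0 (Classical.arbitrary I)).trans (hσ _)
  -- the remainder
  set X : I → Ω → ℝ := fun pr ω => max (|Z pr.1.1 pr.1.2 ω| - κ * Lnorm 2 (ψ pr.1.1 pr.1.2)) 0
    with hX
  have hXg : ∀ pr, Integrable (X pr) P ∧
      ∫ ω, X pr ω ∂P ≤ 2 * Lnorm 2 (ψ pr.1.1 pr.1.2) * Real.exp (-κ ^ 2 / 2) := fun pr =>
    aux_gauss (hZm _ _) _ (hZ _ pr.2.1 _ pr.2.2.1 pr.2.2.2) κ hκ1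
  have hX0 : ∀ pr ω, 0 ≤ X pr ω := fun pr ω => le_max_right _ _
  set R : Ω → ℝ := fun ω => ∑ pr, X pr ω with hR
  have hRi : Integrable R P := integrable_finset_sum _ fun pr _ => (hXg pr).1
  have hRint : ∫ ω, R ω ∂P ≤ 2 * Q1 * ε := by
    rw [hR, integral_finset_sum _ fun pr _ => (hXg pr).1]
    calc ∑ pr, ∫ ω, X pr ω ∂P ≤ ∑ pr : I, 2 * Q1 * Real.exp (-κ ^ 2 / 2) := by
          refine Finset.sum_le_sum fun pr _ => (hXg pr).2.trans ?_
          gcongr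
          exact hσ pr
      _ = Fintype.card I * (2 * Q1 * Real.exp (-κ ^ 2 / 2)) := by simp
      _ ≤ (Λε.card : ℝ) ^ 2 * (2 * Q1 * Real.exp (-κ ^ 2 / 2)) := by gcongr
      _ = 2 * Q1 * ((Λε.card : ℝ) ^ 2 * Real.exp (-κ ^ 2 / 2)) := by ring
      _ = _ := by rw [hκ3]
  have hXR : ∀ pr ω, X pr ω ≤ R ω := fun pr ω =>
    Finset.single_le_sum (f := fun pr => X pr ω) (fun i _ => hX0 i ω) (Finset.mem_univ pr)
  have hZR : ∀ (pr : I) ω, |Z pr.1.1 pr.1.2 ω| ≤ κ * Lnorm 2 (ψ pr.1.1 pr.1.2) + R ω := by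
    intro pr ω
    have h1 := hXR pr ω
    have h2 : |Z pr.1.1 pr.1.2 ω| - κ * Lnorm 2 (ψ pr.1.1 pr.1.2) ≤ X pr ω := le_max_left _ _
    linarith
  have hHol : ∀ (pr : I) (h : (Fin d → ℝ) → ℝ), MemLp h p (cubeMeasure d) →
      |∫ t, ψ pr.1.1 pr.1.2 t * h t ∂(cubeMeasure d)| ≤ Lnorm p h := by
    intro pr h hh
    have h1 := aux_holder hconj (hpsi pr).1 hh
    rw [(hpsi pr).2.1, one_mul] at h1
    exact h1
  have hInt : ∀ (pr : I) (h : (Fin d → ℝ) → ℝ), MemLp h p (cubeMeasure d) →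
      Integrable (fun t => ψ pr.1.1 pr.1.2 t * h t) (cubeMeasure d) := by
    intro pr h hh
    exact MemLp.integrable_mul (p := q) (q := p) (hpsi pr).1 hh
  -- upper bound on the criterion
  have hMle : ∀ lam ω, M lam ω ≤ Lnorm p (fun t => f t - FL lam t) + ε * R ω := by
    intro lam ω
    rw [hM]
    refine ciSup_le fun pr => ?_
    have h0 : Lnorm q (ψ pr.1.1 pr.1.2) = 1 := (hpsi pr).2.1
    rw [h0, div_one]
    have h1 := hHol pr _ (hfp.sub (hFLp lam))
    have h2 := abs_add_le (∫ t, ψ pr.1.1 pr.1.2 t * (f t - FL lam t) ∂(cubeMeasure d))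
      (ε * Z pr.1.1 pr.1.2 ω)
    rw [abs_mul, abs_of_pos hε] at h2
    have h3 := mul_le_mul_of_nonneg_left (hZR pr ω) hε.le
    have h1' : |∫ t, ψ pr.1.1 pr.1.2 t * (f t - FL lam t) ∂(cubeMeasure d)| ≤
      Lnorm p (fun t => f t - FL lam t) := h1
    linarith
  have hleM : ∀ lam ω (pr : I),
      |∫ t, ψ pr.1.1 pr.1.2 t * (f t - FL lam t) ∂(cubeMeasure d)| ≤
        M lam ω + 2 * (ε * κ * Q1) + ε * R ω := by
    intro lam ω pr
    have h0 : Lnorm q (ψ pr.1.1 pr.1.2) = 1 := (hpsi pr).2.1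
    have h1 := le_ciSup (f := fun pr : I =>
      (|(∫ t, ψ pr.1.1 pr.1.2 t * (f t - FL lam t) ∂(cubeMeasure d)) +
              ε * Z pr.1.1 pr.1.2 ω| - ε * κ * Lnorm 2 (ψ pr.1.1 pr.1.2)) /
            Lnorm q (ψ pr.1.1 pr.1.2)) (Set.finite_range _).bddAbove pr
    rw [← hM] at h1
    simp only [h0, div_one] at h1
    have h2 := abs_sub_abs_le_abs_sub (∫ t, ψ pr.1.1 pr.1.2 t * (f t - FL lam t) ∂(cubeMeasure d))
      (-(ε * Z pr.1.1 pr.1.2 ω))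
    rw [abs_neg, abs_mul, abs_of_pos hε, sub_neg_eq_add] at h2
    have h3 := mul_le_mul_of_nonneg_left (hZR pr ω) hε.le
    have h4 : ε * κ * Lnorm 2 (ψ pr.1.1 pr.1.2) ≤ ε * κ * Q1 :=
      mul_le_mul_of_nonneg_left (hσ pr) (by positivity)
    linarith
  -- pointwise oracle inequality
  have hpt : ∀ lam ∈ simplex N, ∀ ω, Lnorm p (fun t => FL (lamhat ω) t - f t) ≤
      3 * Lnorm p (fun t => f t - FL lam t) + 2 * (ε * κ * Q1) + 4 * L * ε + 2 * ε * R ω := by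
    intro lam hl ω
    set lh := lamhat ω with hlh
    obtain ⟨mu, hmu, hmu2⟩ := hnet lam hl
    obtain ⟨mh, hmh, hmh2⟩ := hnet lh (hlam ω)
    have hnetn : ∀ l m : Fin N → ℝ, ∑ i, |l i - m i| ≤ ε →
        Lnorm p (fun t => FL l t - FL m t) ≤ L * ε := by
      intro l m h
      exact aux_net hp1 hFp hL hF l m _ (fun t => by rw [hFL, hFL]) h
    have n1 := hnetn _ _ hmu2
    have n2 := hnetn _ _ hmh2
    have t1 : Lnorm p (fun t => FL lh t - f t) ≤ Lnorm p (fun t => FL lh t - FL lam t) +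
        Lnorm p (fun t => FL lam t - f t) :=
      aux_tri hp1 _ ((hFLp _).sub (hFLp _)) ((hFLp _).sub hfp) (fun t => by simp)
    have t1' : Lnorm p (fun t => FL lam t - f t) = Lnorm p (fun t => f t - FL lam t) := by
      unfold Lnorm; rw [aux_symm]
    have t2 : Lnorm p (fun t => FL lh t - FL lam t) ≤ Lnorm p (fun t => FL lh t - FL mh t) +
        Lnorm p (fun t => FL mh t - FL lam t) :=
      aux_tri hp1 _ ((hFLp _).sub (hFLp _)) ((hFLp _).sub (hFLp _)) (fun t => by simp)
    have t3 : Lnorm p (fun t => FL mh t - FL lam t) ≤ Lnorm p (fun t => FL mh t - FL mu t) +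
        Lnorm p (fun t => FL mu t - FL lam t) :=
      aux_tri hp1 _ ((hFLp _).sub (hFLp _)) ((hFLp _).sub (hFLp _)) (fun t => by simp)
    have t4 : Lnorm p (fun t => FL mu t - FL lam t) = Lnorm p (fun t => FL lam t - FL mu t) := by
      unfold Lnorm; rw [aux_symm]
    have t5 : Lnorm p (fun t => FL mh t - FL lh t) = Lnorm p (fun t => FL lh t - FL mh t) := by
      unfold Lnorm; rw [aux_symm]
    have hR0 : 0 ≤ R ω := Finset.sum_nonneg fun pr _ => hX0 pr ω
    have hεR : 0 ≤ ε * R ω := by positivity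
    have hεκ : 0 ≤ ε * κ * Q1 := by positivity
    have hd0 : 0 ≤ Lnorm p (fun t => f t - FL lam t) := ENNReal.toReal_nonneg
    have key : Lnorm p (fun t => FL mh t - FL mu t) ≤ 2 * L * ε +
        2 * Lnorm p (fun t => f t - FL lam t) + 2 * (ε * κ * Q1) + 2 * (ε * R ω) := by
      by_cases hz : Lnorm p (fun t => FL mh t - FL mu t) = 0
      · rw [hz]; positivity
      let pr : I := ⟨(mh, mu), hmh, hmu, hz⟩
      have k0 : ∫ t, ψ mh mu t * (FL mh t - FL mu t) ∂(cubeMeasure d) =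
        Lnorm p (fun t => FL mh t - FL mu t) := (hpsi pr).2.2.1
      have m1 := (hFLp mh).sub (hFLp lh)
      have m2 := (hFLp lam).sub (hFLp mu)
      have m3 := hfp.sub (hFLp lam)
      have m4 := hfp.sub (hFLp lh)
      have i1 : Integrable (fun t => ψ mh mu t * (FL mh t - FL lh t)) (cubeMeasure d) :=
        hInt pr _ m1
      have i2 : Integrable (fun t => ψ mh mu t * (FL lam t - FL mu t)) (cubeMeasure d) :=
        hInt pr _ m2
      have i3 : Integrable (fun t => ψ mh mu t * (f t - FL lam t)) (cubeMeasure d) :=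
        hInt pr _ m3
      have i4 : Integrable (fun t => ψ mh mu t * (f t - FL lh t)) (cubeMeasure d) :=
        hInt pr _ m4
      have k1 : ∫ t, ψ mh mu t * (FL mh t - FL mu t) ∂(cubeMeasure d) =
          ((∫ t, ψ mh mu t * (FL mh t - FL lh t) ∂(cubeMeasure d)) +
          ∫ t, ψ mh mu t * (FL lam t - FL mu t) ∂(cubeMeasure d)) +
          ((∫ t, ψ mh mu t * (f t - FL lam t) ∂(cubeMeasure d)) -
          ∫ t, ψ mh mu t * (f t - FL lh t) ∂(cubeMeasure d)) := by
        rw [← integral_add i1 i2, ← integral_sub i3 i4, ← integral_add (by exact i1.add i2) (by exact i3.sub i4)]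
        congr 1
        ext t
        ring
      have b1 : |∫ t, ψ mh mu t * (FL mh t - FL lh t) ∂(cubeMeasure d)| ≤
        Lnorm p (fun t => FL mh t - FL lh t) := hHol pr _ m1
      have b2 : |∫ t, ψ mh mu t * (FL lam t - FL mu t) ∂(cubeMeasure d)| ≤
        Lnorm p (fun t => FL lam t - FL mu t) := hHol pr _ m2
      have b3 : |∫ t, ψ mh mu t * (f t - FL lam t) ∂(cubeMeasure d)| ≤
        Lnorm p (fun t => f t - FL lam t) := hHol pr _ m3
      have b4 : |∫ t, ψ mh mu t * (f t - FL lh t) ∂(cubeMeasure d)| ≤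
        M lh ω + 2 * (ε * κ * Q1) + ε * R ω := hleM lh ω pr
      have b5 := hmin ω lam hl
      have b6 := hMle lam ω
      have a1 := le_abs_self (∫ t, ψ mh mu t * (FL mh t - FL lh t) ∂(cubeMeasure d))
      have a2 := le_abs_self (∫ t, ψ mh mu t * (FL lam t - FL mu t) ∂(cubeMeasure d))
      have a3 := le_abs_self (∫ t, ψ mh mu t * (f t - FL lam t) ∂(cubeMeasure d))
      have a4 := neg_abs_le (∫ t, ψ mh mu t * (f t - FL lh t) ∂(cubeMeasure d))
      linarith
    linarith
  -- expectation
  have hexp : ∀ lam ∈ simplex N, ∫ ω, Lnorm p (fun t => FL (lamhat ω) t - f t) ∂P ≤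
      3 * Lnorm p (fun t => f t - FL lam t) + (2 * (ε * κ * Q1) + 4 * L * ε + 4 * ε ^ 2 * Q1) := by
    intro lam hl
    refine (integral_mono_of_nonneg (Filter.Eventually.of_forall fun ω => ENNReal.toReal_nonneg)
      ((integrable_const _).add (hRi.const_mul (2 * ε)))
      (Filter.Eventually.of_forall (hpt lam hl))).trans ?_
    simp only [Pi.add_apply]
    rw [integral_add (integrable_const _) (hRi.const_mul (2 * ε)), integral_const_mul]
    simp only [integral_const, probReal_univ, one_smul]
    have := mul_le_mul_of_nonneg_left hRint (by positivity : 0 ≤ 2 * ε)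
    linarith
  haveI : Nonempty (simplex N) := ⟨⟨0, by simp [simplex]⟩⟩
  have hinf : (∫ ω, Lnorm p (fun t => FL (lamhat ω) t - f t) ∂P -
      (2 * (ε * κ * Q1) + 4 * L * ε + 4 * ε ^ 2 * Q1)) / 3 ≤
      ⨅ lam : simplex N, Lnorm p (fun t => f t - FL lam.1 t) := by
    refine le_ciInf fun lam => ?_
    have := hexp lam.1 lam.2
    linarith
  have c1 : 4 * ε ^ 2 * Q1 ≤ 2 * (ε * κ * Q1) := by
    have : ε * Q1 * (2 * ε) ≤ ε * Q1 * κ :=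
      mul_le_mul_of_nonneg_left (by linarith) (by positivity)
    linarith
  have c2 : ε * κ * Q1 ≤ 5 * (Q1 * ε * Real.sqrt (N * Real.log (1 / ε))) := by
    have := mul_le_mul_of_nonneg_left hκ2 (by positivity : 0 ≤ ε * Q1)
    linarith
  have c3 : 0 ≤ L * ε := by positivity
  linarith
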